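/- arXiv:1806.06001 — 2 statements merged into one kernel-verified Lean document; each statement's English description precedes it below -/
import Mathlib

section
/- Let X be a completely regular Hausdorff (T3.5) space. Player II has a winning strategy in the Rothberger game G1(O_X,O_X) on X if and only if player I has a winning strategy in the discrete selection game CD(Cp(X)). -/
open Set Filter Topology

/-- The list `[a 0, …, a (n-1)]` of the first `n` moves of a play `a`. -/
def hist {α : Type*} (a : ℕ → α) (n : ℕ) : List α :=
  List.ofFn fun i : Fin n => a i

section SelectionGames

variable {M : Type*}

/-- The selection principle `S1(A,B)`. -/
def S1 (A B : Set (Set M)) : Prop :=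
  ∀ a : ℕ → Set M, (∀ n, a n ∈ A) →
    ∃ b : ℕ → M, (∀ n, b n ∈ a n) ∧ Set.range b ∈ B

/-- The selection principle `Sfin(A,B)`. -/
def Sfin (A B : Set (Set M)) : Prop :=
  ∀ a : ℕ → Set M, (∀ n, a n ∈ A) →
    ∃ b : ℕ → Set M, (∀ n, b n ⊆ a n ∧ (b n).Finite) ∧ (⋃ n, b n) ∈ B

/-- Player I has a winning predetermined strategy in the selection game `G1(A,B)`:
a sequence of moves `σ n ∈ A`, depending only on the round number, such that
no legal sequence of responses by II produces a member of `B`. -/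
def IPredetWinsG1 (A B : Set (Set M)) : Prop :=
  ∃ σ : ℕ → Set M, (∀ n, σ n ∈ A) ∧
    ∀ b : ℕ → M, (∀ n, b n ∈ σ n) → Set.range b ∉ B

/-- Player I has a winning predetermined strategy in the selection game `Gfin(A,B)`. -/
def IPredetWinsGfin (A B : Set (Set M)) : Prop :=
  ∃ σ : ℕ → Set M, (∀ n, σ n ∈ A) ∧
    ∀ b : ℕ → Set M, (∀ n, b n ⊆ σ n ∧ (b n).Finite) → (⋃ n, b n) ∉ B

/-- Player I has a winning (perfect-information) strategy in `G1(A,B)`: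
I's move in round `n` depends on II's previous moves `b 0, …, b (n-1)`. -/
def IWinsG1 (A B : Set (Set M)) : Prop :=
  ∃ σ : List M → Set M, (∀ h, σ h ∈ A) ∧
    ∀ b : ℕ → M, (∀ n, b n ∈ σ (hist b n)) → Set.range b ∉ B

/-- Player II has a winning (perfect-information) strategy in `G1(A,B)`:
II's move in round `n` depends on I's previous moves `a 0, …, a (n-1)`
together with I's current move `a n`; it is legal and always produces a member of `B`. -/
def IIWinsG1 (A B : Set (Set M)) : Prop :=
  ∃ σ : List (Set M) → Set M → M,
    ∀ a : ℕ → Set M, (∀ n, a n ∈ A) →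
      (∀ n, σ (hist a n) (a n) ∈ a n) ∧
      Set.range (fun n => σ (hist a n) (a n)) ∈ B

/-- Player II has a winning Markov strategy in `G1(A,B)`: II's move depends only on
I's current move and the round number. -/
def IIMarkovWinsG1 (A B : Set (Set M)) : Prop :=
  ∃ σ : Set M → ℕ → M,
    ∀ a : ℕ → Set M, (∀ n, a n ∈ A) →
      (∀ n, σ (a n) n ∈ a n) ∧
      Set.range (fun n => σ (a n) n) ∈ B

end SelectionGames

section TopologicalGames

variable {X : Type*}

/-- `𝒰` is an open cover of the space `X`. -/
def IsOpenCover [TopologicalSpace X] (𝒰 : Set (Set X)) : Prop :=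
  (∀ U ∈ 𝒰, IsOpen U) ∧ ⋃₀ 𝒰 = Set.univ

/-- `𝒰` is an ω-cover of `X`: an open cover such that every finite subset of `X`
is contained in a single member of `𝒰`. -/
def IsOmegaCover [TopologicalSpace X] (𝒰 : Set (Set X)) : Prop :=
  IsOpenCover 𝒰 ∧ ∀ F : Finset X, ∃ U ∈ 𝒰, ↑F ⊆ U

/-- `D` is a closed discrete subset of the space. -/
def IsClosedDiscrete [TopologicalSpace X] (D : Set X) : Prop :=
  IsClosed D ∧ ∀ x ∈ D, ∃ U : Set X, IsOpen U ∧ U ∩ D = {x}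

/-- Player I has a winning predetermined strategy in the point-open game `PO(X)`. -/
def IPredetWinsPO (X : Type*) [TopologicalSpace X] : Prop :=
  ∃ p : ℕ → X, ∀ U : ℕ → Set X,
    (∀ n, IsOpen (U n) ∧ p n ∈ U n) → (⋃ n, U n) = Set.univ

/-- Player II has a winning Markov strategy in the point-open game `PO(X)`. -/
def IIMarkovWinsPO (X : Type*) [TopologicalSpace X] : Prop :=
  ∃ σ : X → ℕ → Set X,
    (∀ x n, IsOpen (σ x n) ∧ x ∈ σ x n) ∧
    ∀ p : ℕ → X, (⋃ n, σ (p n) n) ≠ Set.univ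

/-- Player I has a winning predetermined strategy in the finite-open game `FO(X)`. -/
def IPredetWinsFO (X : Type*) [TopologicalSpace X] : Prop :=
  ∃ p : ℕ → Finset X, ∀ U : ℕ → Set X,
    (∀ n, IsOpen (U n) ∧ ↑(p n) ⊆ U n) → (⋃ n, U n) = Set.univ

/-- Player II has a winning Markov strategy in the finite-open game `FO(X)`. -/
def IIMarkovWinsFO (X : Type*) [TopologicalSpace X] : Prop :=
  ∃ σ : Finset X → ℕ → Set X,
    (∀ F n, IsOpen (σ F n) ∧ ↑F ⊆ σ F n) ∧
    ∀ F : ℕ → Finset X, (⋃ n, σ (F n) n) ≠ Set.univ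

/-- Player I has a winning predetermined strategy in the game `ΩFO(X)`. -/
def IPredetWinsOmegaFO (X : Type*) [TopologicalSpace X] : Prop :=
  ∃ p : ℕ → Finset X, ∀ U : ℕ → Set X,
    (∀ n, IsOpen (U n) ∧ ↑(p n) ⊆ U n) → IsOmegaCover (Set.range U)

/-- Player I has a winning (perfect-information) strategy in the game `ΩFO(X)`:
I's move in round `n` depends on II's previous moves `U 0, …, U (n-1)`. -/
def IWinsOmegaFO (X : Type*) [TopologicalSpace X] : Prop :=
  ∃ σ : List (Set X) → Finset X, ∀ U : ℕ → Set X,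
    (∀ n, IsOpen (U n) ∧ ↑(σ (hist U n)) ⊆ U n) → IsOmegaCover (Set.range U)

/-- Player II has a winning (perfect-information) strategy in the game `ΩFO(X)`:
II's move in round `n` depends on I's previous moves together with I's current move. -/
def IIWinsOmegaFO (X : Type*) [TopologicalSpace X] : Prop :=
  ∃ σ : List (Finset X) → Finset X → Set X,
    (∀ h F, IsOpen (σ h F) ∧ ↑F ⊆ σ h F) ∧
    ∀ F : ℕ → Finset X, ¬ IsOmegaCover (Set.range fun n => σ (hist F n) (F n))

/-- Player II has a winning Markov strategy in the game `ΩFO(X)`. -/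
def IIMarkovWinsOmegaFO (X : Type*) [TopologicalSpace X] : Prop :=
  ∃ σ : Finset X → ℕ → Set X,
    (∀ F n, IsOpen (σ F n) ∧ ↑F ⊆ σ F n) ∧
    ∀ F : ℕ → Finset X, ¬ IsOmegaCover (Set.range fun n => σ (F n) n)

/-- Player II has a winning tactic in the game `ΩPO(X)`: II's move depends only on
I's current move. -/
def IITacticWinsOmegaPO (X : Type*) [TopologicalSpace X] : Prop :=
  ∃ σ : X → Set X,
    (∀ x, IsOpen (σ x) ∧ x ∈ σ x) ∧
    ∀ p : ℕ → X, ¬ IsOmegaCover (Set.range fun n => σ (p n))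

/-- Player I has a winning (perfect-information) strategy in the discrete
selection game `CD(Y)`. -/
def IWinsCD (Y : Type*) [TopologicalSpace Y] : Prop :=
  ∃ σ : List Y → Set Y,
    (∀ h, IsOpen (σ h) ∧ (σ h).Nonempty) ∧
    ∀ y : ℕ → Y, (∀ n, y n ∈ σ (hist y n)) → ¬ IsClosedDiscrete (Set.range y)

/-- Player I has a winning predetermined strategy in the discrete selection game `CD(Y)`. -/
def IPredetWinsCD (Y : Type*) [TopologicalSpace Y] : Prop :=
  ∃ U : ℕ → Set Y, (∀ n, IsOpen (U n) ∧ (U n).Nonempty) ∧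
    ∀ y : ℕ → Y, (∀ n, y n ∈ U n) → ¬ IsClosedDiscrete (Set.range y)

/-- Player II has a winning (perfect-information) strategy in the discrete
selection game `CD(Y)`. -/
def IIWinsCD (Y : Type*) [TopologicalSpace Y] : Prop :=
  ∃ σ : List (Set Y) → Set Y → Y,
    ∀ U : ℕ → Set Y, (∀ n, IsOpen (U n) ∧ (U n).Nonempty) →
      (∀ n, σ (hist U n) (U n) ∈ U n) ∧
      IsClosedDiscrete (Set.range fun n => σ (hist U n) (U n))

/-- Player II has a winning Markov strategy in the discrete selection game `CD(Y)`. -/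
def IIMarkovWinsCD (Y : Type*) [TopologicalSpace Y] : Prop :=
  ∃ σ : Set Y → ℕ → Y,
    ∀ U : ℕ → Set Y, (∀ n, IsOpen (U n) ∧ (U n).Nonempty) →
      (∀ n, σ (U n) n ∈ U n) ∧
      IsClosedDiscrete (Set.range fun n => σ (U n) n)

/-- Player II has a winning (perfect-information) strategy in the closure game `CL(Y,x)`. -/
def IIWinsCL (Y : Type*) [TopologicalSpace Y] (x : Y) : Prop :=
  ∃ σ : List (Set Y) → Set Y → Y,
    ∀ U : ℕ → Set Y, (∀ n, IsOpen (U n) ∧ (U n).Nonempty) →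
      (∀ n, σ (hist U n) (U n) ∈ U n) ∧
      x ∉ closure (Set.range fun n => σ (hist U n) (U n))

/-- Player II has a winning Markov strategy in the closure game `CL(Y,x)`. -/
def IIMarkovWinsCL (Y : Type*) [TopologicalSpace Y] (x : Y) : Prop :=
  ∃ σ : Set Y → ℕ → Y,
    ∀ U : ℕ → Set Y, (∀ n, IsOpen (U n) ∧ (U n).Nonempty) →
      (∀ n, σ (U n) n ∈ U n) ∧
      x ∉ closure (Set.range fun n => σ (U n) n)

/-- Player II has a winning (perfect-information) strategy in Gruenhage's
clustering game at `x`. -/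
def IIWinsGruCluster (Y : Type*) [TopologicalSpace Y] (x : Y) : Prop :=
  ∃ σ : List (Set Y) → Set Y → Y,
    ∀ U : ℕ → Set Y, (∀ n, IsOpen (U n) ∧ x ∈ U n) →
      (∀ n, σ (hist U n) (U n) ∈ U n) ∧
      ¬ MapClusterPt x atTop (fun n => σ (hist U n) (U n))

/-- Player II has a winning Markov strategy in Gruenhage's clustering game at `x`. -/
def IIMarkovWinsGruCluster (Y : Type*) [TopologicalSpace Y] (x : Y) : Prop :=
  ∃ σ : Set Y → ℕ → Y,
    ∀ U : ℕ → Set Y, (∀ n, IsOpen (U n) ∧ x ∈ U n) →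
      (∀ n, σ (U n) n ∈ U n) ∧
      ¬ MapClusterPt x atTop (fun n => σ (U n) n)

/-- Player I has a winning predetermined strategy in Gruenhage's clustering game at `x`. -/
def IPredetWinsGruCluster (Y : Type*) [TopologicalSpace Y] (x : Y) : Prop :=
  ∃ U : ℕ → Set Y, (∀ n, IsOpen (U n) ∧ x ∈ U n) ∧
    ∀ y : ℕ → Y, (∀ n, y n ∈ U n) → MapClusterPt x atTop y

/-- Player I has a winning predetermined strategy in Gruenhage's W-game at `x`
(I wins when II's points converge to `x`). -/
def IPredetWinsGruW (Y : Type*) [TopologicalSpace Y] (x : Y) : Prop :=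
  ∃ U : ℕ → Set Y, (∀ n, IsOpen (U n) ∧ x ∈ U n) ∧
    ∀ y : ℕ → Y, (∀ n, y n ∈ U n) → Filter.Tendsto y atTop (𝓝 x)

end TopologicalGames

/-- `Cp X`: the continuous real-valued functions on `X` with the topology of
pointwise convergence (inherited from the product topology on `X → ℝ`). -/
def Cp (X : Type*) [TopologicalSpace X] : Type _ := {f : X → ℝ // Continuous f}

instance (X : Type*) [TopologicalSpace X] : TopologicalSpace (Cp X) :=
  inferInstanceAs (TopologicalSpace {f : X → ℝ // Continuous f})

/-- The constant zero function, as an element of `Cp X`. -/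
def Cp.zero (X : Type*) [TopologicalSpace X] : Cp X := ⟨fun _ => 0, continuous_const⟩

lemma hist_succ {α : Type*} (a : ℕ → α) (n : ℕ) : hist a (n + 1) = hist a n ++ [a n] := by
  rw [hist, List.ofFn_succ_last]
  rfl

@[simp] lemma length_hist {α : Type*} (a : ℕ → α) (n : ℕ) : (hist a n).length = n := by
  simp [hist]

lemma mem_hist {α : Type*} {a : ℕ → α} {n : ℕ} {x : α} :
    x ∈ hist a n ↔ ∃ i < n, a i = x := by
  simp only [hist, List.mem_ofFn']
  exact ⟨fun ⟨i, hi⟩ => ⟨i, i.2, hi⟩, fun ⟨i, h, hi⟩ => ⟨⟨i, h⟩, hi⟩⟩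

lemma hist_isPrefix_of_le {α : Type*} (a : ℕ → α) {m n : ℕ} (h : m ≤ n) : hist a m <+: hist a n := by
  induction n, h using Nat.le_induction with
  | base => exact List.prefix_rfl
  | succ n _ ih =>
    rw [hist_succ]
    exact ih.trans (List.prefix_append _ _)

lemma hist_comp_sublist {α : Type*} (a : ℕ → α) {φ : ℕ → ℕ} (hφ : StrictMono φ) (n : ℕ) :
    (hist (a ∘ φ) n).Sublist (hist a (φ n)) := by
  induction n with
  | zero => simp [hist]
  | succ n ih =>
    have h : (hist (a ∘ φ) (n + 1)).Sublist (hist a (φ n + 1)) := by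
      rw [hist_succ, hist_succ]
      exact ih.append (List.Sublist.refl _)
    exact h.trans (hist_isPrefix_of_le a (hφ n.lt_succ_self)).sublist

/-- Player I has a winning strategy in the point-open game `PO(X)`. -/
def IWinsPO (X : Type*) [TopologicalSpace X] : Prop :=
  ∃ s : List (Set X) → X, ∀ U : ℕ → Set X,
    (∀ n, IsOpen (U n) ∧ s (hist U n) ∈ U n) → ⋃ n, U n = Set.univ

/-- Every finite list of legal moves of I, followed by one more legal move, is answered
legally by a winning strategy of II. -/
lemma response_mem {M : Type*} {A B : Set (Set M)} {σ : List (Set M) → Set M → M}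
    (hσ : ∀ a : ℕ → Set M, (∀ n, a n ∈ A) → (∀ n, σ (hist a n) (a n) ∈ a n) ∧
      Set.range (fun n => σ (hist a n) (a n)) ∈ B)
    {h : List (Set M)} (hh : ∀ 𝒰 ∈ h, 𝒰 ∈ A) {𝒰 : Set M} (h𝒰 : 𝒰 ∈ A) : σ h 𝒰 ∈ 𝒰 := by
  have key := (hσ (fun n => h.getD n 𝒰) fun n => by
    by_cases hn : n < h.length
    · simpa [hn] using hh _ (List.getElem_mem hn)
    · simpa [hn] using h𝒰).1 h.length
  have e : hist (fun n => h.getD n 𝒰) h.length = h := by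
    apply List.ext_getElem
    · simp
    · intro i h1 h2
      simp [hist]
  rw [e] at key
  simpa using key

/-- Galvin's lemma: after any legal history, some point has all its open neighbourhoods among
the possible answers of II. -/
lemma exists_point_forall_nhds_response {X : Type*} [TopologicalSpace X]
    {σ : Set (Set X) → Set X} (hσ : ∀ 𝒰, IsOpenCover 𝒰 → σ 𝒰 ∈ 𝒰) :
    ∃ x, ∀ U, IsOpen U → x ∈ U → ∃ 𝒰, IsOpenCover 𝒰 ∧ σ 𝒰 = U := by
  by_contra! H
  choose U hU hx hne using H
  have hc : IsOpenCover (Set.range U) := by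
    refine ⟨by rintro _ ⟨x, rfl⟩; exact hU x, ?_⟩
    exact Set.eq_univ_of_forall fun x => ⟨U x, ⟨x, rfl⟩, hx x⟩
  obtain ⟨x, h⟩ := hσ _ hc
  exact hne x _ hc h.symm

lemma IIWinsG1.iWinsPO {X : Type*} [TopologicalSpace X]
    (H : IIWinsG1 {𝒰 : Set (Set X) | IsOpenCover 𝒰} {𝒰 : Set (Set X) | IsOpenCover 𝒰}) :
    IWinsPO X := by
  obtain ⟨σ, hσ⟩ := H
  have hpt : ∀ h : List (Set (Set X)), ∃ x, (∀ 𝒰 ∈ h, IsOpenCover 𝒰) →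
      ∀ U, IsOpen U → x ∈ U → ∃ 𝒰, IsOpenCover 𝒰 ∧ σ h 𝒰 = U := by
    have x₀ : X := (exists_point_forall_nhds_response (σ := σ [])
      fun 𝒰 h𝒰 => response_mem hσ (by simp) h𝒰).choose
    intro h
    by_cases hh : ∀ 𝒰 ∈ h, IsOpenCover 𝒰
    · obtain ⟨x, hx⟩ := exists_point_forall_nhds_response (σ := σ h)
        fun 𝒰 h𝒰 => response_mem hσ hh h𝒰
      exact ⟨x, fun _ => hx⟩
    · exact ⟨x₀, fun h' => absurd h' hh⟩
  choose pt hpt using hpt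
  have hcov : ∀ (h : List (Set (Set X))) (U : Set X), ∃ 𝒰 : Set (Set X),
      (∀ 𝒱 ∈ h, IsOpenCover 𝒱) → IsOpen U → pt h ∈ U → IsOpenCover 𝒰 ∧ σ h 𝒰 = U := by
    intro h U
    by_cases hh : (∀ 𝒱 ∈ h, IsOpenCover 𝒱) ∧ IsOpen U ∧ pt h ∈ U
    · obtain ⟨𝒰, h𝒰⟩ := hpt h hh.1 U hh.2.1 hh.2.2
      exact ⟨𝒰, fun _ _ _ => h𝒰⟩
    · exact ⟨∅, fun h1 h2 h3 => absurd ⟨h1, h2, h3⟩ hh⟩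
  choose cov hcov using hcov
  let T : List (Set X) → List (Set (Set X)) := List.foldl (fun h U => h ++ [cov h U]) []
  refine ⟨fun l => pt (T l), fun U hU => ?_⟩
  let a : ℕ → Set (Set X) := fun n => cov (T (hist U n)) (U n)
  have hT : ∀ n, T (hist U n) = hist a n := by
    intro n
    induction n with
    | zero => simp [T, hist]
    | succ n ih =>
      have : T (hist U n ++ [U n]) = T (hist U n) ++ [a n] := by simp [T, a]
      rw [hist_succ, hist_succ, this, ih]
  have ha : ∀ n, IsOpenCover (a n) ∧ σ (hist a n) (a n) = U n := by
    intro n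
    induction n using Nat.strong_induction_on with
    | _ n ih =>
      have := hcov (T (hist U n)) (U n) (by
        rw [hT]
        intro 𝒱 h𝒱
        obtain ⟨i, hi, rfl⟩ := mem_hist.1 h𝒱
        exact (ih i hi).1) (hU n).1 (hU n).2
      rwa [← hT]
  have h := (hσ a fun n => (ha n).1).2.2
  simpa [(ha _).2, Set.sUnion_range] using h

lemma mapIdx_hist {α β : Type*} (f : ℕ → α → β) (a : ℕ → α) (n : ℕ) :
    (hist a n).mapIdx f = hist (fun i => f i (a i)) n := by
  apply List.ext_getElem
  · simp
  · intro i h1 h2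
    simp [hist]

/-- In the point-open game, I can play finitely many points per round so that each point of the
space eventually belongs to all the sets of II. -/
lemma eventually_mem_of_sublists {X : Type*} [TopologicalSpace X] {s : List (Set X) → X}
    (hs : ∀ U : ℕ → Set X, (∀ n, IsOpen (U n) ∧ s (hist U n) ∈ U n) → ⋃ n, U n = Set.univ)
    {U : ℕ → Set X} (hU : ∀ n, IsOpen (U n))
    (hsU : ∀ n, ∀ l, l.Sublist (hist U n) → s l ∈ U n) (x : X) : ∀ᶠ n in atTop, x ∈ U n := by
  by_contra H
  obtain ⟨φ, hφ, hx⟩ := extraction_of_frequently_atTop (not_eventually.1 H)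
  have := hs (U ∘ φ) fun n => ⟨hU _, hsU _ _ (hist_comp_sublist U hφ n)⟩
  obtain ⟨n, hn⟩ := mem_iUnion.1 (this.symm ▸ mem_univ x : x ∈ ⋃ n, (U ∘ φ) n)
  exact hx n hn

lemma Cp.continuous_eval {X : Type*} [TopologicalSpace X] (x : X) :
    Continuous fun f : Cp X => f.1 x :=
  (continuous_apply x).comp continuous_subtype_val

lemma IWinsPO.iWinsCD {X : Type*} [TopologicalSpace X] (H : IWinsPO X) : IWinsCD (Cp X) := by
  obtain ⟨s, hs⟩ := H
  let u : ℕ → Cp X → Set X := fun i f => {x | |f.1 x| < 1 / ((i : ℝ) + 1)}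
  let σ : List (Cp X) → Set (Cp X) := fun h =>
    {f | ∀ x ∈ (h.mapIdx u).sublists.map s, f.1 x ∈ Ioo (0 : ℝ) (1 / ((h.length : ℝ) + 1))}
  refine ⟨σ, fun h => ⟨?_, ?_⟩, fun y hy hcd => ?_⟩
  · have : σ h = ⋂ x ∈ {x | x ∈ (h.mapIdx u).sublists.map s},
        (fun f : Cp X => f.1 x) ⁻¹' Ioo (0 : ℝ) (1 / ((h.length : ℝ) + 1)) := by
      ext f; simp [σ]
    rw [this]
    exact (List.finite_toSet _).isOpen_biInter fun x _ =>
      isOpen_Ioo.preimage (Cp.continuous_eval x)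
  · have hp : (0 : ℝ) < 1 / ((h.length : ℝ) + 1) := by positivity
    exact ⟨⟨fun _ => 1 / ((h.length : ℝ) + 1) / 2, continuous_const⟩,
      fun x _ => ⟨half_pos hp, half_lt_self hp⟩⟩
  · have hy' : ∀ (n : ℕ) l, l.Sublist (hist (fun i => u i (y i)) n) →
        (y n).1 (s l) ∈ Ioo (0 : ℝ) (1 / ((n : ℝ) + 1)) := by
      intro n l hl
      have := hy n (s l) (List.mem_map_of_mem (by rwa [List.mem_sublists, mapIdx_hist]))
      rwa [length_hist] at this
    have hev := eventually_mem_of_sublists hs (U := fun i => u i (y i))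
      (fun n => isOpen_lt (y n).2.abs continuous_const)
      (fun n l hl => abs_lt.2 ⟨by
        have := (hy' n l hl).1
        have : (0 : ℝ) < 1 / ((n : ℝ) + 1) := by positivity
        linarith, (hy' n l hl).2⟩)
    have hlim : Tendsto y atTop (𝓝 (Cp.zero X)) := by
      refine tendsto_subtype_rng.2 (tendsto_pi_nhds.2 fun x => ?_)
      exact squeeze_zero_norm' ((hev x).mono fun n hn => le_of_lt hn)
        tendsto_one_div_add_atTop_nhds_zero_nat
    obtain ⟨n, hn⟩ := hcd.1.mem_of_tendsto hlim (Eventually.of_forall fun n => ⟨n, rfl⟩)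
    have := (hy' n [] (List.nil_sublist _)).1
    rw [hn] at this
    exact lt_irrefl _ this

lemma Cp.exists_finset_of_isOpen {X : Type*} [TopologicalSpace X] {W : Set (Cp X)}
    (hW : IsOpen W) (hne : W.Nonempty) :
    ∃ (f : Cp X) (F : Finset X), ∀ g : Cp X, (∀ x ∈ F, g.1 x = f.1 x) → g ∈ W := by
  obtain ⟨f, hf⟩ := hne
  obtain ⟨O, hO, rfl⟩ := isOpen_induced_iff.1 hW
  obtain ⟨I, v, hv, hI⟩ := isOpen_pi_iff.1 hO f.1 hf
  refine ⟨f, I, fun g hg => hI fun x hx => ?_⟩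
  rw [hg x hx]
  exact (hv x hx).2

lemma exists_continuous_zero_on_finset_one_off {X : Type*} [TopologicalSpace X]
    [CompletelyRegularSpace X] (F : Finset X) {U : Set X} (hU : IsOpen U) (hF : ↑F ⊆ U) :
    ∃ h : X → ℝ, Continuous h ∧ (∀ x ∈ F, h x = 0) ∧ ∀ x ∉ U, h x = 1 := by
  have H : ∀ p : F, ∃ f : X → unitInterval, Continuous f ∧ f p = 0 ∧ EqOn f 1 Uᶜ := fun p =>
    CompletelyRegularSpace.completely_regular p.1 Uᶜ hU.isClosed_compl (by simpa using hF p.2)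
  choose f hf h0 h1 using H
  refine ⟨fun x => ∏ p, (f p x : ℝ),
    continuous_finsetProd _ fun p _ => continuous_subtype_val.comp (hf p), fun x hx => ?_,
    fun x hx => ?_⟩
  · exact Finset.prod_eq_zero (Finset.mem_univ ⟨x, hx⟩) (by simp [h0])
  · exact Finset.prod_eq_one fun p _ => by simp [h1 p hx]

lemma Cp.exists_mem_eq_const_off {X : Type*} [TopologicalSpace X] [CompletelyRegularSpace X]
    {W : Set (Cp X)} (hW : IsOpen W) (hne : W.Nonempty) :
    ∃ F : Finset X, ∀ U : Set X, IsOpen U → ↑F ⊆ U → ∀ c : ℝ,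
      ∃ g ∈ W, ∀ x ∉ U, g.1 x = c := by
  obtain ⟨f, F, hf⟩ := Cp.exists_finset_of_isOpen hW hne
  refine ⟨F, fun U hU hF c => ?_⟩
  obtain ⟨h, hc, h0, h1⟩ := exists_continuous_zero_on_finset_one_off F hU hF
  refine ⟨⟨fun x => f.1 x + h x * (c - f.1 x), f.2.add (hc.mul (continuous_const.sub f.2))⟩,
    hf _ fun x hx => ?_, fun x hx => ?_⟩
  · simp [h0 x hx]
  · simp [h1 x hx]

lemma Cp.isClosedDiscrete_range {X : Type*} [TopologicalSpace X] {y : ℕ → Cp X} {x : X}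
    (hy : ∀ k, (y k).1 x = k) : IsClosedDiscrete (Set.range y) := by
  have : T2Space (Cp X) := inferInstanceAs (T2Space {f : X → ℝ // Continuous f})
  constructor
  · have hlf : LocallyFinite fun k : ℕ => ({y k} : Set (Cp X)) := by
      intro f
      refine ⟨(fun g : Cp X => g.1 x) ⁻¹' Iio (f.1 x + 1),
        (isOpen_Iio.preimage (Cp.continuous_eval x)).mem_nhds (by simp), ?_⟩
      refine (finite_Iio ⌈f.1 x + 1⌉₊).subset ?_
      rintro k ⟨_, rfl, hg⟩
      simp only [mem_preimage, mem_Iio, hy] at hg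
      exact Nat.lt_ceil.2 hg
    have := hlf.isClosed_iUnion fun k => isClosed_singleton
    rwa [iUnion_singleton_eq_range] at this
  · rintro _ ⟨k, rfl⟩
    refine ⟨(fun g : Cp X => g.1 x) ⁻¹' Metric.ball (k : ℝ) 1,
      Metric.isOpen_ball.preimage (Cp.continuous_eval x), ?_⟩
    ext g
    constructor
    · rintro ⟨hg, j, rfl⟩
      simp only [mem_preimage, hy, Metric.mem_ball, Nat.dist_cast_real] at hg
      have : j = k := by
        rw [Nat.dist_eq, ← Int.cast_natCast (R := ℝ) j, ← Int.cast_natCast (R := ℝ) k] at hg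
        have h' : |(j : ℤ) - k| < 1 := by exact_mod_cast hg
        have := abs_lt.1 h'
        omega
      rw [this]; rfl
    · rintro rfl
      exact ⟨by simp [hy], k, rfl⟩

/-- A position in the simulation of a play of `CD(Cp X)` during a play of the Rothberger game:
the functions played so far, the union of the open sets collected for the current round, and the
points still to be covered in it. -/
structure SimState (X : Type*) [TopologicalSpace X] where
  /-- The functions played so far in `CD(Cp X)`. -/
  played : List (Cp X)
  /-- The union of the open sets collected in the current round. -/
  covered : Set X
  /-- The points to be covered before the current round ends. -/
  todo : List X

namespace SimState

variable {X : Type*} [TopologicalSpace X]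

/-- Add the open set `U` to the collected ones; if no point was pending, play `g` and start a
new round. -/
noncomputable def step (F : List (Cp X) → Finset X) (g : List (Cp X) → Set X → Cp X)
    (s : SimState X) (U : Set X) : SimState X :=
  match s.todo with
  | [] => ⟨s.played ++ [g s.played (s.covered ∪ U)], ∅,
      (F (s.played ++ [g s.played (s.covered ∪ U)])).toList⟩
  | _ :: ps => ⟨s.played, s.covered ∪ U, ps⟩

variable {F : List (Cp X) → Finset X} {g : List (Cp X) → Set X → Cp X}

lemma played_prefix_step (s : SimState X) (U : Set X) :
    s.played <+: (s.step F g U).played := by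
  rcases s with ⟨l, V, _ | ⟨p, ps⟩⟩ <;> simp [step]

lemma exists_length_lt {s : ℕ → SimState X} {u : ℕ → Set X}
    (hs : ∀ n, s (n + 1) = (s n).step F g (u n)) (k : ℕ) : ∃ n, k < (s n).played.length := by
  have adv : ∀ t n, (s n).todo.length = t →
      ∃ m, (s n).played.length < (s m).played.length := by
    intro t
    induction t with
    | zero =>
      intro n hn
      refine ⟨n + 1, ?_⟩
      rw [hs]
      simp [step, List.length_eq_zero_iff.1 hn]
    | succ t ih =>
      intro n hn
      obtain ⟨p, ps, hp⟩ := List.exists_cons_of_length_eq_add_one hn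
      obtain ⟨m, hm⟩ := ih (n + 1) (by rw [hs]; simp_all [step])
      exact ⟨m, lt_of_le_of_lt (by rw [hs]; simp [step, hp]) hm⟩
  induction k with
  | zero =>
    obtain ⟨m, hm⟩ := adv _ 0 rfl
    exact ⟨m, by omega⟩
  | succ k ih =>
    obtain ⟨n, hn⟩ := ih
    obtain ⟨m, hm⟩ := adv _ n rfl
    exact ⟨m, by omega⟩

/-- The property of a state kept during a simulation in which the point `x` is never covered. -/
structure Inv (σ : List (Cp X) → Set (Cp X)) (F : List (Cp X) → Finset X) (x : X)
    (s : SimState X) : Prop where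
  isOpen : IsOpen s.covered
  mem_or : ∀ p ∈ F s.played, p ∈ s.covered ∨ p ∈ s.todo
  notMem : x ∉ s.covered
  legal : ∀ k f, s.played[k]? = some f → f ∈ σ (s.played.take k) ∧ f.1 x = k

lemma Inv.step {σ : List (Cp X) → Set (Cp X)} {x : X}
    (hg : ∀ l U, IsOpen U → ↑(F l) ⊆ U → g l U ∈ σ l ∧ ∀ x ∉ U, (g l U).1 x = l.length)
    {s : SimState X} (hs : s.Inv σ F x) {U : Set X} (hU : IsOpen U) (hx : x ∉ U)
    (hp : ∀ p ∈ s.todo.head?, p ∈ U) : (s.step F g U).Inv σ F x := by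
  rcases s with ⟨l, V, _ | ⟨p, ps⟩⟩ <;> obtain ⟨h1, h2, h3, h4⟩ := hs <;>
    simp only [SimState.step] at *
  · obtain ⟨hgσ, hgx⟩ := hg l (V ∪ U) (h1.union hU) fun p hp =>
      Or.inl ((h2 p hp).resolve_right (by simp))
    refine ⟨isOpen_empty, fun p hp => Or.inr (by simpa using hp), by simp, fun k f hf => ?_⟩
    rcases lt_trichotomy k l.length with hk | rfl | hk
    · rw [List.getElem?_append_left hk] at hf
      have := h4 k f hf
      rwa [List.take_append_of_le_length hk.le]
    · have : g l (V ∪ U) = f := by simpa using hf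
      subst this
      exact ⟨by simpa using hgσ, hgx x (by simp [h3, hx])⟩
    · rw [List.getElem?_eq_none (by simp; omega)] at hf
      cases hf
  · refine ⟨h1.union hU, fun q hq => ?_, by simp [h3, hx], h4⟩
    rcases h2 q hq with h | h
    · exact Or.inl (Or.inl h)
    · rcases List.mem_cons.1 h with rfl | h
      · exact Or.inl (Or.inr (hp q (by simp)))
      · exact Or.inr h

end SimState

lemma exists_hist_eq_of_isPrefix_succ {α : Type*} {l : ℕ → List α} (hl : ∀ n, l n <+: l (n + 1))
    (hlen : ∀ k, ∃ n, k < (l n).length) :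
    ∃ y : ℕ → α, ∀ k, ∃ n, (l n)[k]? = some (y k) ∧ (l n).take k = hist y k := by
  have mono : ∀ {m n}, m ≤ n → l m <+: l n := by
    intro m n h
    induction n, h using Nat.le_induction with
    | base => exact List.prefix_rfl
    | succ n _ ih => exact ih.trans (hl n)
  choose N hN using hlen
  refine ⟨fun k => (l (N k))[k]'(hN k), fun k => ⟨N k, by simp [hN k], ?_⟩⟩
  apply List.ext_getElem
  · simpa using (hN k).le
  · intro i h1 h2
    have hik : i < k := by simpa using h2
    simp only [List.getElem_take, hist, List.getElem_ofFn]
    rcases le_total (N k) (N i) with h | h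
    · exact (mono h).getElem _
    · exact ((mono h).getElem _).symm

lemma IWinsCD.iiWinsG1 {X : Type*} [TopologicalSpace X] [CompletelyRegularSpace X]
    (H : IWinsCD (Cp X)) :
    IIWinsG1 {𝒰 : Set (Set X) | IsOpenCover 𝒰} {𝒰 : Set (Set X) | IsOpenCover 𝒰} := by
  obtain ⟨σ, hσ, hwin⟩ := H
  have hX : Nonempty X := by
    by_contra hX
    rw [not_nonempty_iff] at hX
    have hsub : Subsingleton (Cp X) := ⟨fun f g => Subtype.ext (Subsingleton.elim _ _)⟩
    have hall : ∀ h, σ h = Set.univ := fun h => Subsingleton.eq_univ_of_nonempty (hσ h).2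
    have hr : Set.range (fun _ : ℕ => Cp.zero X) = Set.univ :=
      Subsingleton.eq_univ_of_nonempty (Set.range_nonempty _)
    refine hwin (fun _ => Cp.zero X) (by simp [hall]) ?_
    rw [hr]
    exact ⟨isClosed_univ, fun f _ => ⟨Set.univ, isOpen_univ, by
      simpa using (Subsingleton.eq_univ_of_nonempty (Set.singleton_nonempty f)).symm⟩⟩
  obtain ⟨x₀⟩ := hX
  choose F hF using fun l => Cp.exists_mem_eq_const_off (hσ l).1 (hσ l).2
  have hg : ∀ (l : List (Cp X)) (U : Set X), ∃ f : Cp X, IsOpen U → ↑(F l) ⊆ U →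
      f ∈ σ l ∧ ∀ x ∉ U, f.1 x = l.length := by
    intro l U
    by_cases h : IsOpen U ∧ ↑(F l) ⊆ U
    · obtain ⟨f, hf⟩ := hF l U h.1 h.2 l.length
      exact ⟨f, fun _ _ => hf⟩
    · exact ⟨Cp.zero X, fun h1 h2 => absurd ⟨h1, h2⟩ h⟩
  choose g hg using hg
  have hpick : ∀ (𝒰 : Set (Set X)) (x : X), ∃ U : Set X, IsOpenCover 𝒰 → U ∈ 𝒰 ∧ x ∈ U := by
    intro 𝒰 x
    by_cases h : IsOpenCover 𝒰
    · obtain ⟨U, hU⟩ := (h.2.symm ▸ mem_univ x : x ∈ ⋃₀ 𝒰)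
      exact ⟨U, fun _ => hU⟩
    · exact ⟨∅, fun h' => absurd h' h⟩
  choose pick hpick using hpick
  let answer : SimState X → Set (Set X) → Set X := fun s 𝒰 => pick 𝒰 (s.todo.headD x₀)
  let state : List (Set (Set X)) → SimState X :=
    List.foldl (fun s 𝒰 => s.step F g (answer s 𝒰)) ⟨[], ∅, (F []).toList⟩
  refine ⟨fun h 𝒰 => answer (state h) 𝒰, fun a ha => ?_⟩
  have hmem : ∀ n, answer (state (hist a n)) (a n) ∈ a n := fun n => (hpick _ _ (ha n)).1
  have hopen : ∀ n, IsOpen (answer (state (hist a n)) (a n)) := fun n => (ha n).1 _ (hmem n)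
  refine ⟨hmem, by rintro _ ⟨n, rfl⟩; exact hopen n, ?_⟩
  rw [Set.sUnion_range]
  by_contra hne
  obtain ⟨x, hx⟩ := (Set.ne_univ_iff_exists_notMem _).1 hne
  rw [mem_iUnion, not_exists] at hx
  have hstep : ∀ n, state (hist a (n + 1)) =
      (state (hist a n)).step F g (answer (state (hist a n)) (a n)) := by
    intro n
    rw [hist_succ]
    simp [state]
  have hinv : ∀ n, (state (hist a n)).Inv σ F x := by
    intro n
    induction n with
    | zero => exact ⟨isOpen_empty, fun p hp => Or.inr (by simpa [state, hist] using hp),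
        notMem_empty _, fun k f hf => by simp [state, hist] at hf⟩
    | succ n ih =>
      rw [hstep]
      refine ih.step hg (hopen n) (hx n) fun p hp => ?_
      have hhead : (state (hist a n)).todo.headD x₀ = p := by
        rw [List.headD_eq_head?_getD, Option.mem_def.1 hp, Option.getD_some]
      exact hhead ▸ (hpick (a n) ((state (hist a n)).todo.headD x₀) (ha n)).2
  obtain ⟨y, hy⟩ := exists_hist_eq_of_isPrefix_succ (l := fun n => (state (hist a n)).played)
    (fun n => by rw [hstep]; exact SimState.played_prefix_step _ _)
    (SimState.exists_length_lt hstep)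
  have hleg : ∀ k, y k ∈ σ (hist y k) ∧ (y k).1 x = k := by
    intro k
    obtain ⟨n, h1, h2⟩ := hy k
    exact h2 ▸ (hinv n).legal k (y k) h1
  exact hwin y (fun k => (hleg k).1) (Cp.isClosedDiscrete_range fun k => (hleg k).2)

/-- For a T3.5 space `X`, II has a winning strategy in the Rothberger
game `G1(O_X, O_X)` on `X` iff I has a winning strategy in the discrete selection
game `CD(Cp(X))`. -/
theorem II_wins_rothberger_iff_I_wins_CD_Cp
    (X : Type*) [TopologicalSpace X] [T35Space X] :
    IIWinsG1 {𝒰 : Set (Set X) | IsOpenCover 𝒰} {𝒰 : Set (Set X) | IsOpenCover 𝒰} ↔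
      IWinsCD (Cp X) := by
  exact ⟨fun h => h.iWinsPO.iWinsCD, fun h => h.iiWinsG1⟩
end

section
/- Let X be a topological space. Player II has a winning Markov strategy in the point-open game PO(X) if and only if player I has a winning predetermined strategy in the Rothberger game G1(O_X,O_X). -/
open Set Filter Topology

/-- For a topological space `X`, II has a winning Markov strategy in the
point-open game `PO(X)` iff I has a winning predetermined strategy in the Rothberger
game `G1(O_X, O_X)`. -/
theorem II_markov_wins_PO_iff_I_predet_wins_rothberger
    (X : Type*) [TopologicalSpace X] :
    IIMarkovWinsPO X ↔
      IPredetWinsG1 {𝒰 : Set (Set X) | IsOpenCover 𝒰} {𝒰 : Set (Set X) | IsOpenCover 𝒰} := by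
  constructor
  · rintro ⟨σ, hσ, hwin⟩
    refine ⟨fun n => range fun x => σ x n, fun n => ⟨?_, ?_⟩, fun b hb hcover => ?_⟩
    · rintro _ ⟨x, rfl⟩
      exact (hσ x n).1
    · exact eq_univ_of_forall fun x => ⟨σ x n, ⟨x, rfl⟩, (hσ x n).2⟩
    · choose p hp using hb
      apply hwin p
      simpa only [hp, sUnion_range] using hcover.2
  · rintro ⟨𝒰, h𝒰, hwin⟩
    have hmem : ∀ (x : X) (n : ℕ), ∃ U ∈ 𝒰 n, x ∈ U := fun x n =>
      mem_sUnion.1 ((h𝒰 n).2 ▸ mem_univ x)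
    choose σ hσ hxσ using hmem
    refine ⟨σ, fun x n => ⟨(h𝒰 n).1 _ (hσ x n), hxσ x n⟩, fun p hp => ?_⟩
    refine hwin (fun n => σ (p n) n) (fun n => hσ (p n) n) ⟨?_, ?_⟩
    · rintro _ ⟨n, rfl⟩
      exact (h𝒰 n).1 _ (hσ (p n) n)
    · rwa [sUnion_range]
end
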